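/- For every integer k ≥ 0, the space of divergence-free n-tuples of degree-k harmonic polynomials decomposes as a direct sum: {(f₁,…,fₙ) : each fᵣ ∈ Hₖ and ∑ᵣ ∂_{xᵣ}(fᵣ) = 0} = ψ(H_{k+1}) ⊕ Ĥ_{k,2}. -/

import Mathlib

open MvPolynomial

/-- The Laplacian `Δ = ∑ᵣ ∂²_{xᵣ}` on `ℝ[x₁,…,xₙ]`. -/
noncomputable def lap {n : ℕ} (p : MvPolynomial (Fin n) ℝ) : MvPolynomial (Fin n) ℝ :=
  ∑ r : Fin n, pderiv r (pderiv r p)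

/-- The gradient map `ψ(f) = (∂_{x₁}f,…,∂_{xₙ}f)`. -/
noncomputable def gradPsi {n : ℕ} (f : MvPolynomial (Fin n) ℝ) :
    Fin n → MvPolynomial (Fin n) ℝ :=
  fun j => pderiv j f

/-- Membership in `ψ(H_{k+1})`. -/
def memPsiH {n : ℕ} (k : ℕ) (v : Fin n → MvPolynomial (Fin n) ℝ) : Prop :=
  ∃ f : MvPolynomial (Fin n) ℝ, f.IsHomogeneous (k + 1) ∧ lap f = 0 ∧ v = gradPsi f

/-- `Ĥ_{k,2}` : tuples of degree-`k` harmonics `(f₁,…,fₙ)` with `∑ᵣ xᵣ fᵣ = 0`. -/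
def memHk2 {n : ℕ} (k : ℕ) (w : Fin n → MvPolynomial (Fin n) ℝ) : Prop :=
  (∀ r, (w r).IsHomogeneous k ∧ lap (w r) = 0) ∧ (∑ r : Fin n, X r * w r) = 0

/-- The space of divergence-free tuples of degree-`k` harmonic polynomials. -/
def memDivFree {n : ℕ} (k : ℕ) (u : Fin n → MvPolynomial (Fin n) ℝ) : Prop :=
  (∀ r, (u r).IsHomogeneous k ∧ lap (u r) = 0) ∧ (∑ r : Fin n, pderiv r (u r)) = 0

theorem pderiv_pderiv_comm {σ R : Type*} [CommRing R] (i j : σ) (p : MvPolynomial σ R) :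
    pderiv i (pderiv j p) = pderiv j (pderiv i p) := by
  classical
  have h : ⁅pderiv (R := R) i, pderiv (R := R) j⁆ = 0 := by
    refine derivation_ext fun l => ?_
    simp only [Derivation.commutator_apply, pderiv_X, Pi.single_apply, Derivation.zero_apply]
    split_ifs <;> simp
  simpa [Derivation.commutator_apply, sub_eq_zero] using congrArg (fun D => D p) h

theorem lap_sub {n : ℕ} (p q : MvPolynomial (Fin n) ℝ) : lap (p - q) = lap p - lap q := by
  simp [lap]

theorem lap_C_mul {n : ℕ} (a : ℝ) (p : MvPolynomial (Fin n) ℝ) :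
    lap (C a * p) = C a * lap p := by
  simp [lap, Finset.mul_sum]

theorem lap_sum {n : ℕ} {ι : Type*} (s : Finset ι) (p : ι → MvPolynomial (Fin n) ℝ) :
    lap (∑ i ∈ s, p i) = ∑ i ∈ s, lap (p i) := by
  simp only [lap, map_sum]
  exact Finset.sum_comm

theorem lap_pderiv {n : ℕ} (i : Fin n) (p : MvPolynomial (Fin n) ℝ) :
    lap (pderiv i p) = pderiv i (lap p) := by
  simp only [lap, map_sum]
  refine Finset.sum_congr rfl fun r _ => ?_
  rw [pderiv_pderiv_comm r i p, pderiv_pderiv_comm r i]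

theorem lap_X_mul {n : ℕ} (i : Fin n) (p : MvPolynomial (Fin n) ℝ) :
    lap (X i * p) = 2 * pderiv i p + X i * lap p := by
  have h (r : Fin n) : pderiv r (pderiv r (X i * p)) =
      (if r = i then 2 * pderiv i p else 0) + X i * pderiv r (pderiv r p) := by
    by_cases hr : r = i
    · subst hr
      simp
      ring
    · simp [pderiv_X_of_ne (Ne.symm hr), hr]
  simp only [lap, h]
  simp [Finset.sum_add_distrib, Finset.mul_sum]

/-- For a tuple of harmonic polynomials, `Δ(∑ᵣ xᵣ fᵣ)` is twice the divergence. -/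
theorem lap_sum_X_mul {n : ℕ} {u : Fin n → MvPolynomial (Fin n) ℝ} (hu : ∀ r, lap (u r) = 0) :
    lap (∑ r, X r * u r) = 2 * ∑ r, pderiv r (u r) := by
  simp [lap_sum, lap_X_mul, hu, Finset.mul_sum]

theorem memDivFree_of_memPsiH {n k : ℕ} {v : Fin n → MvPolynomial (Fin n) ℝ}
    (hv : memPsiH k v) : memDivFree k v := by
  obtain ⟨f, hf, hlap, rfl⟩ := hv
  refine ⟨fun r => ⟨hf.pderiv, ?_⟩, hlap⟩
  simp [gradPsi, lap_pderiv, hlap]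

theorem memDivFree_of_memHk2 {n k : ℕ} {w : Fin n → MvPolynomial (Fin n) ℝ}
    (hw : memHk2 k w) : memDivFree k w := by
  refine ⟨hw.1, ?_⟩
  have h := lap_sum_X_mul fun r => (hw.1 r).2
  simpa [hw.2, lap] using h

/-- Euler's identity, solved for the potential of a homogeneous gradient field. -/
theorem eq_C_inv_mul_sum_X_mul_gradPsi {n k : ℕ} {f : MvPolynomial (Fin n) ℝ}
    (hf : f.IsHomogeneous (k + 1)) :
    f = C ((k + 1 : ℝ)⁻¹) * ∑ r, X r * gradPsi f r := by
  have hk : (k + 1 : ℝ) ≠ 0 := by positivity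
  simp only [gradPsi]
  rw [hf.sum_X_mul_pderiv, C_mul', ← Nat.cast_smul_eq_nsmul ℝ, smul_smul]
  simp [hk]

/-- `{(f₁,…,fₙ) : fᵣ ∈ Hₖ, ∑ᵣ ∂_{xᵣ}(fᵣ) = 0} = ψ(H_{k+1}) ⊕ Ĥ_{k,2}`:
both summands lie in the divergence-free space and each of its elements decomposes
uniquely as a sum of elements of the two summands. -/
theorem divFree_decomposition (n : ℕ) (hn : 3 ≤ n) (k : ℕ) :
    (∀ v : Fin n → MvPolynomial (Fin n) ℝ, memPsiH k v → memDivFree k v) ∧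
    (∀ w : Fin n → MvPolynomial (Fin n) ℝ, memHk2 k w → memDivFree k w) ∧
    (∀ u : Fin n → MvPolynomial (Fin n) ℝ, memDivFree k u →
      ∃! p : (Fin n → MvPolynomial (Fin n) ℝ) × (Fin n → MvPolynomial (Fin n) ℝ),
        memPsiH k p.1 ∧ memHk2 k p.2 ∧ u = p.1 + p.2) := by
  refine ⟨fun _ => memDivFree_of_memPsiH, fun _ => memDivFree_of_memHk2, fun u hu => ?_⟩
  set f := C ((k + 1 : ℝ)⁻¹) * ∑ r, X r * u r with hf_def
  have hk : (k + 1 : ℝ) ≠ 0 := by positivity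
  have hf : f.IsHomogeneous (k + 1) := by
    refine IsHomogeneous.C_mul (IsHomogeneous.sum _ _ _ fun r _ => ?_) _
    rw [add_comm]
    exact (isHomogeneous_X ℝ r).mul (hu.1 r).1
  have hlap : lap f = 0 := by
    rw [lap_C_mul, lap_sum_X_mul fun r => (hu.1 r).2, hu.2, mul_zero, mul_zero]
  have hgrad : memPsiH k (gradPsi f) := ⟨f, hf, hlap, rfl⟩
  have hgrad_harm := (memDivFree_of_memPsiH hgrad).1
  refine ⟨(gradPsi f, u - gradPsi f), ⟨hgrad, ⟨fun r => ⟨?_, ?_⟩, ?_⟩, by simp⟩, ?_⟩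
  · exact (hu.1 r).1.sub (hgrad_harm r).1
  · simp [lap_sub, (hu.1 r).2, (hgrad_harm r).2]
  · have hC : (C ((k + 1 : ℝ)⁻¹) : MvPolynomial (Fin n) ℝ) ≠ 0 := by simpa using hk
    have h := (eq_C_inv_mul_sum_X_mul_gradPsi hf).symm.trans hf_def
    simp [mul_sub, mul_left_cancel₀ hC h]
  · rintro ⟨v, w⟩ ⟨⟨g, hg, -, hv⟩, hw, huvw⟩
    dsimp only at hv hw huvw
    subst hv
    have hgf : g = f := by
      rw [eq_C_inv_mul_sum_X_mul_gradPsi hg, hf_def, huvw]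
      simp [mul_add, Finset.sum_add_distrib, hw.2]
    subst hgf
    simp [huvw]
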